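/- Let x(t) = Σ_{k=1}^K A_k(t) e^{2πi φ_k(t)} belong to the class 𝒟_{ε₁,ε₂} and let g, σ be as in the context, with Ṽ^{g'}_x the adaptive STFT with window g' in place of g. Then for all (t,η), |Ṽ^{g'}_x(t,η) − 2πi σ(t) Σ_{ℓ=1}^K x_ℓ(t) (η − φ'_ℓ(t)) ĝ(σ(t)(η − φ'_ℓ(t)))| ≤ σ(t) Λ̃₀(t), where Λ̃₀(t) = K ε₁ Ĩ₁ + π ε₂ Ĩ₂ σ(t) Σ_{k=1}^K A_k(t) and Ĩ_n = ∫_ℝ |τ^n g'(τ)| dτ. -/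

import Mathlib

/-!
Substituting `τ = σ(t) u`, the transform of each component `x_k` becomes
`∫ x_k(t + σ u) g'(u) e^{-2πi η σ u} du`. Near `t` the component is close to the pure tone
`x_k(t) e^{2πi φ_k'(t) σ u}`: the amplitude moves by at most `ε₁ σ |u|`, and by Taylor's formula
the phase deviates from its tangent by at most `ε₂ (σ u)² / 2` (`taylor_two_bound`), so that
`pure_tone_error` bounds the pointwise error by `ε₁ σ |u| + π ε₂ A_k(t) (σ u)²`. Integrating
against `|g'|` yields the first two absolute moments of `g'` (`component_bound`).
The pure tone itself contributes `x_k(t) (g')^(σ(η - φ_k'(t)))`, and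
`(g')^(ξ) = 2πi ξ ĝ(ξ)` (`ft_deriv`) turns it into the claimed main term.
-/

open MeasureTheory Real Set Filter
open scoped Topology Real

noncomputable section

/-- `e2πi θ = exp(2πiθ)`. -/
def e2πi (θ : ℝ) : ℂ := Complex.exp (2 * (π : ℂ) * (θ : ℂ) * Complex.I)

/-- Fourier transform with the convention `ŵ(ξ) = ∫ w(u) e^{-2πiξu} du`. -/
def ft (w : ℝ → ℂ) (ξ : ℝ) : ℂ := ∫ u : ℝ, w u * e2πi (-(ξ * u))

/-- The adaptive STFT with window `w` and time-varying parameter `σ`. -/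
def adSTFT (σ : ℝ → ℝ) (w : ℝ → ℂ) (x : ℝ → ℂ) (t η : ℝ) : ℂ :=
  ∫ τ : ℝ, x (t + τ) * ((σ t : ℂ))⁻¹ * w (τ / σ t) * e2πi (-(η * τ))

/-- Absolute moments `I_n = ∫ |τ^n w(τ)| dτ`. -/
def absMom (w : ℝ → ℂ) (n : ℕ) : ℝ := ∫ τ : ℝ, |τ| ^ n * ‖w τ‖

/-- The window `g₁(u) = u g(u)`. -/
def g1w (g : ℝ → ℂ) : ℝ → ℂ := fun u => (u : ℂ) * g u

/-- The window `g₂(u) = u² g(u)`. -/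
def g2w (g : ℝ → ℂ) : ℝ → ℂ := fun u => (u : ℂ) ^ 2 * g u

/-- The window `g₃(u) = u g'(u)`. -/
def g3w (g : ℝ → ℂ) : ℝ → ℂ := fun u => (u : ℂ) * deriv g u

/-- `∂_t` of the adaptive STFT. -/
def adSTFTt (σ : ℝ → ℝ) (w : ℝ → ℂ) (x : ℝ → ℂ) (t η : ℝ) : ℂ :=
  deriv (fun s => adSTFT σ w x s η) t

/-- `∂_η` of the adaptive STFT. -/
def adSTFTη (σ : ℝ → ℝ) (w : ℝ → ℂ) (x : ℝ → ℂ) (t η : ℝ) : ℂ :=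
  deriv (fun η' => adSTFT σ w x t η') η

/-- The complex phase transformation `ω^{adp,c}` of the adaptive FSST. -/
def omegaC (σ : ℝ → ℝ) (g x : ℝ → ℂ) (t η : ℝ) : ℂ :=
  adSTFTt σ g x t η / (2 * (π : ℂ) * Complex.I * adSTFT σ g x t η)
  + ((deriv σ t : ℝ) : ℂ) / (2 * (π : ℂ) * Complex.I * (σ t : ℂ))
  + ((deriv σ t / σ t : ℝ) : ℂ) * adSTFT σ (g3w g) x t η /
      (2 * (π : ℂ) * Complex.I * adSTFT σ g x t η)

/-- The (real) phase transformation `ω^{adp}` of the adaptive FSST. -/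
def omegaAdp (σ : ℝ → ℝ) (g x : ℝ → ℂ) (t η : ℝ) : ℝ :=
  (adSTFTt σ g x t η / (2 * (π : ℂ) * Complex.I * adSTFT σ g x t η)).re
  + (deriv σ t / σ t) *
      (adSTFT σ (g3w g) x t η / (2 * (π : ℂ) * Complex.I * adSTFT σ g x t η)).re

/-- The quantity `P₀(t,η)` of the second-order adaptive FSST. -/
def P0 (σ : ℝ → ℝ) (g x : ℝ → ℂ) (t η : ℝ) : ℂ :=
  (deriv (fun η' => adSTFTt σ g x t η' / adSTFT σ g x t η') η
    + ((deriv σ t / σ t : ℝ) : ℂ) *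
        deriv (fun η' => adSTFT σ (g3w g) x t η' / adSTFT σ g x t η') η)
  / deriv (fun η' => adSTFT σ (g1w g) x t η' / adSTFT σ g x t η') η

/-- The complex second-order phase transformation `ω^{adp,2nd,c}`. -/
def omega2C (σ : ℝ → ℝ) (g x : ℝ → ℂ) (t η : ℝ) : ℂ :=
  ((deriv σ t : ℝ) : ℂ) / (2 * (π : ℂ) * Complex.I * (σ t : ℂ))
  + adSTFTt σ g x t η / (2 * (π : ℂ) * Complex.I * adSTFT σ g x t η)
  - adSTFT σ (g1w g) x t η / (2 * (π : ℂ) * Complex.I * adSTFT σ g x t η) * P0 σ g x t η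
  + ((deriv σ t / σ t : ℝ) : ℂ) * adSTFT σ (g3w g) x t η /
      (2 * (π : ℂ) * Complex.I * adSTFT σ g x t η)

/-- The (real) second-order phase transformation `ω^{adp,2nd}`. -/
def omega2 (σ : ℝ → ℝ) (g x : ℝ → ℂ) (t η : ℝ) : ℝ := (omega2C σ g x t η).re

/-- The adaptive FSST `R^{adp,λ}_{x,γ}`. -/
def fsst (σ : ℝ → ℝ) (g x : ℝ → ℂ) (h : ℝ → ℝ) (γ lam t ξ : ℝ) : ℂ :=
  ∫ η in {η : ℝ | γ < ‖adSTFT σ g x t η‖},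
    adSTFT σ g x t η * ((lam⁻¹ * h ((ξ - omegaAdp σ g x t η) / lam) : ℝ) : ℂ)

/-- The second-order adaptive FSST `R^{adp,2nd,λ}_{x,γ₁,γ₂}`. -/
def fsst2 (σ : ℝ → ℝ) (g x : ℝ → ℂ) (h : ℝ → ℝ) (γ₁ γ₂ lam t ξ : ℝ) : ℂ :=
  ∫ η in {η : ℝ | γ₁ < ‖adSTFT σ g x t η‖ ∧
      γ₂ < ‖deriv (fun η' => adSTFT σ (g1w g) x t η' / adSTFT σ g x t η') η‖},
    adSTFT σ g x t η * ((lam⁻¹ * h ((ξ - omega2 σ g x t η) / lam) : ℝ) : ℂ)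

/-- The chirp kernel `G^w_ℓ(t,η)` associated with linear phase `a` and chirp rate `b`. -/
def chirpG (σ : ℝ → ℝ) (w : ℝ → ℂ) (a b : ℝ) (t η : ℝ) : ℂ :=
  ∫ τ : ℝ, e2πi (a * τ + b * τ ^ 2 / 2) * ((σ t : ℂ))⁻¹ * w (τ / σ t) * e2πi (-(η * τ))

/-- The Fourier transform of the chirped window `e^{iπru²} w(u)`. -/
def chirpFT (r : ℝ) (w : ℝ → ℂ) (ξ : ℝ) : ℂ :=
  ∫ u : ℝ, e2πi (r * u ^ 2 / 2) * w u * e2πi (-(ξ * u))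

/-- The residual `err^w(t,η) = Ṽ^w_x(t,η) - Σ_ℓ x_ℓ(t) G^w_ℓ(t,η)`. -/
def errW (σ : ℝ → ℝ) (w : ℝ → ℂ) (K : ℕ) (A φ : Fin K → ℝ → ℝ) (x : ℝ → ℂ)
    (t η : ℝ) : ℂ :=
  adSTFT σ w x t η - ∑ ℓ, (A ℓ t : ℂ) * e2πi (φ ℓ t) *
    chirpG σ w (deriv (φ ℓ) t) (deriv (deriv (φ ℓ)) t) t η

/-- The quantity `Err₁` of the second-order analysis. -/
def Err1 (σ : ℝ → ℝ) (g x : ℝ → ℂ) (K : ℕ) (A φ : Fin K → ℝ → ℝ) (k : Fin K)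
    (t η : ℝ) : ℂ :=
  2 * (π : ℂ) * Complex.I *
      (∑ ℓ ∈ Finset.univ.erase k, (A ℓ t : ℂ) * e2πi (φ ℓ t) *
        ((deriv (φ ℓ) t - deriv (φ k) t : ℝ) : ℂ) *
        chirpG σ g (deriv (φ ℓ) t) (deriv (deriv (φ ℓ)) t) t η)
  + 2 * (π : ℂ) * Complex.I * (σ t : ℂ) *
      (∑ ℓ ∈ Finset.univ.erase k, (A ℓ t : ℂ) * e2πi (φ ℓ t) *
        ((deriv (deriv (φ ℓ)) t - deriv (deriv (φ k)) t : ℝ) : ℂ) *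
        chirpG σ (g1w g) (deriv (φ ℓ) t) (deriv (deriv (φ ℓ)) t) t η)
  + 2 * (π : ℂ) * Complex.I * ((η - deriv (φ k) t : ℝ) : ℂ) * errW σ g K A φ x t η
  - errW σ (deriv g) K A φ x t η / (σ t : ℂ)
  - 2 * (π : ℂ) * Complex.I * ((deriv (deriv (φ k)) t : ℝ) : ℂ) * (σ t : ℂ) *
      errW σ (g1w g) K A φ x t η

/-- The quantity `Err₂` of the second-order analysis. -/
def Err2 (σ : ℝ → ℝ) (g x : ℝ → ℂ) (K : ℕ) (A φ : Fin K → ℝ → ℝ) (k : Fin K)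
    (t η : ℝ) : ℂ :=
  4 * (π : ℂ) ^ 2 * (σ t : ℂ) *
      (∑ ℓ ∈ Finset.univ.erase k, (A ℓ t : ℂ) * e2πi (φ ℓ t) *
        ((deriv (φ ℓ) t - deriv (φ k) t : ℝ) : ℂ) *
        chirpG σ (g1w g) (deriv (φ ℓ) t) (deriv (deriv (φ ℓ)) t) t η)
  + 4 * (π : ℂ) ^ 2 * (σ t : ℂ) ^ 2 *
      (∑ ℓ ∈ Finset.univ.erase k, (A ℓ t : ℂ) * e2πi (φ ℓ t) *
        ((deriv (deriv (φ ℓ)) t - deriv (deriv (φ k)) t : ℝ) : ℂ) *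
        chirpG σ (g2w g) (deriv (φ ℓ) t) (deriv (deriv (φ ℓ)) t) t η)
  + 2 * (π : ℂ) * Complex.I * errW σ g K A φ x t η
  + 4 * (π : ℂ) ^ 2 * ((η - deriv (φ k) t : ℝ) : ℂ) * (σ t : ℂ) * errW σ (g1w g) K A φ x t η
  + 2 * (π : ℂ) * Complex.I * errW σ (g3w g) K A φ x t η
  - 4 * (π : ℂ) ^ 2 * ((deriv (deriv (φ k)) t : ℝ) : ℂ) * (σ t : ℂ) ^ 2 *
      errW σ (g2w g) K A φ x t η

/-- The quantity `Err₃` of the second-order analysis. -/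
def Err3 (σ : ℝ → ℝ) (g x : ℝ → ℂ) (K : ℕ) (A φ : Fin K → ℝ → ℝ) (k : Fin K)
    (t η : ℝ) : ℂ :=
  (adSTFT σ g x t η * Err2 σ g x K A φ k t η
    - adSTFTη σ g x t η * Err1 σ g x K A φ k t η)
  / (adSTFT σ g x t η * adSTFTη σ (g1w g) x t η
    - adSTFT σ (g1w g) x t η * adSTFTη σ g x t η)

lemma e2πi_eq (θ : ℝ) : e2πi θ = Complex.exp (Complex.I * ((2 * π * θ : ℝ) : ℂ)) := by
  unfold e2πi
  congr 1
  push_cast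
  ring

lemma e2πi_add (a b : ℝ) : e2πi (a + b) = e2πi a * e2πi b := by
  unfold e2πi
  rw [← Complex.exp_add]
  congr 1
  push_cast
  ring

lemma norm_e2πi (θ : ℝ) : ‖e2πi θ‖ = 1 := by
  rw [e2πi_eq, mul_comm, Complex.norm_exp_ofReal_mul_I]

@[fun_prop]
lemma continuous_e2πi : Continuous e2πi := by
  unfold e2πi
  fun_prop

lemma norm_e2πi_sub_le (a b : ℝ) : ‖e2πi a - e2πi b‖ ≤ 2 * π * |a - b| := by
  have h : e2πi a - e2πi b = e2πi b * (e2πi (a - b) - 1) := by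
    rw [mul_sub, ← e2πi_add, mul_one]
    congr 2
    ring
  rw [h, norm_mul, norm_e2πi, one_mul, e2πi_eq]
  refine Real.norm_exp_I_mul_ofReal_sub_one_le.trans_eq ?_
  rw [Real.norm_eq_abs, abs_mul, abs_of_pos Real.two_pi_pos]

lemma ft_eq_fourier (w : ℝ → ℂ) (ξ : ℝ) : ft w ξ = FourierTransform.fourier w ξ := by
  rw [Real.fourier_real_eq_integral_exp_smul]
  unfold ft
  refine integral_congr_ae (Eventually.of_forall fun u => ?_)
  simp only [smul_eq_mul]
  rw [mul_comm, e2πi]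
  congr 2
  push_cast
  ring

lemma ft_deriv (g : SchwartzMap ℝ ℂ) (ξ : ℝ) :
    ft (deriv g) ξ = 2 * (π : ℂ) * Complex.I * ξ * ft g ξ := by
  have hd : Integrable (deriv g) := (SchwartzMap.derivCLM ℝ ℂ g).integrable
  rw [ft_eq_fourier, ft_eq_fourier, Real.fourier_deriv g.integrable g.differentiable hd]
  simp only [smul_eq_mul]

lemma lipschitz_bound {A : ℝ → ℝ} {ε : ℝ} (hA : ContDiff ℝ 1 A)
    (hA' : ∀ s, |deriv A s| ≤ ε) (t h : ℝ) : |A (t + h) - A t| ≤ ε * |h| := by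
  have := Convex.norm_image_sub_le_of_norm_deriv_le (f := A) (s := Set.univ) (C := ε)
    (fun x _ => (hA.differentiable one_ne_zero) x) (fun x _ => hA' x) convex_univ
    (Set.mem_univ t) (Set.mem_univ (t + h))
  simpa using this

/-- First-order Taylor estimate with remainder `ε h² / 2`, for either sign of `h`. -/
lemma taylor_two_bound {φ : ℝ → ℝ} {ε : ℝ} (hφ : ContDiff ℝ 2 φ)
    (hφ'' : ∀ s, |deriv (deriv φ) s| ≤ ε) (t h : ℝ) :
    |φ (t + h) - (φ t + deriv φ t * h)| ≤ ε * h ^ 2 / 2 := by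
  have hφ1 : ContDiff ℝ 1 (deriv φ) := by
    have : ContDiff ℝ (1 + 1) φ := by simpa [one_add_one_eq_two] using hφ
    exact (contDiff_succ_iff_deriv.1 this).2.2
  have hd : Differentiable ℝ φ := hφ.differentiable two_ne_zero
  -- The remainder is followed along the segment `t + s h`, `0 ≤ s ≤ 1`, which covers both signs.
  have hf : ∀ s, HasDerivAt (fun s => φ (t + s * h) - (φ t + deriv φ t * (s * h)))
      (deriv φ (t + s * h) * h - deriv φ t * h) s := by
    intro s
    have h1 : HasDerivAt (fun s : ℝ => s * h) h s := by
      simpa using (hasDerivAt_id s).mul_const h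
    exact ((hd (t + s * h)).hasDerivAt.comp s (h1.const_add t)).sub
      ((h1.const_mul (deriv φ t)).const_add (φ t))
  have hB : ∀ s : ℝ, HasDerivAt (fun s : ℝ => ε * h ^ 2 / 2 * s ^ 2) (ε * h ^ 2 * s) s := by
    intro s
    refine ((hasDerivAt_pow 2 s).const_mul (ε * h ^ 2 / 2)).congr_deriv ?_
    norm_num
    ring
  have := image_norm_le_of_norm_deriv_right_le_deriv_boundary (a := 0) (b := 1)
    (fun s _ => (hf s).continuousAt.continuousWithinAt)
    (fun s _ => (hf s).hasDerivWithinAt) (by simp) hB (fun s hs => by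
      have hl := lipschitz_bound hφ1 hφ'' t (s * h)
      rw [← sub_mul, norm_mul, Real.norm_eq_abs, Real.norm_eq_abs]
      calc _ ≤ ε * |s * h| * |h| := by gcongr
        _ = ε * h ^ 2 * s := by
          rw [abs_mul, abs_of_nonneg hs.1, ← sq_abs h]
          ring) (Set.right_mem_Icc.2 zero_le_one)
  simpa using this

/-- A component with slowly varying amplitude and frequency is close to the pure tone that
touches it at `t`. -/
lemma pure_tone_error {A φ : ℝ → ℝ} {ε₁ ε₂ : ℝ} (hA1 : ContDiff ℝ 1 A) (hφ2 : ContDiff ℝ 2 φ)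
    (hApos : ∀ s, 0 < A s) (hA' : ∀ s, |deriv A s| ≤ ε₁)
    (hφ'' : ∀ s, |deriv (deriv φ) s| ≤ ε₂) (t h : ℝ) :
    ‖(A (t + h) : ℂ) * e2πi (φ (t + h)) - A t * e2πi (φ t) * e2πi (deriv φ t * h)‖
      ≤ ε₁ * |h| + π * ε₂ * A t * h ^ 2 := by
  have hsplit : (A (t + h) : ℂ) * e2πi (φ (t + h)) - A t * e2πi (φ t) * e2πi (deriv φ t * h)
      = ((A (t + h) - A t : ℝ) : ℂ) * e2πi (φ (t + h))
        + (A t : ℂ) * (e2πi (φ (t + h)) - e2πi (φ t + deriv φ t * h)) := by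
    rw [e2πi_add]
    push_cast
    ring
  rw [hsplit]
  refine (norm_add_le _ _).trans (add_le_add ?_ ?_)
  · rw [norm_mul, norm_e2πi, mul_one, Complex.norm_real]
    exact lipschitz_bound hA1 hA' t h
  · rw [norm_mul, Complex.norm_real, Real.norm_of_nonneg (hApos t).le]
    have h1 := (norm_e2πi_sub_le (φ (t + h)) (φ t + deriv φ t * h)).trans
      (mul_le_mul_of_nonneg_left (taylor_two_bound hφ2 hφ'' t h) Real.two_pi_pos.le)
    calc _ ≤ A t * (2 * π * (ε₂ * h ^ 2 / 2)) := mul_le_mul_of_nonneg_left h1 (hApos t).le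
      _ = _ := by ring

/-- A continuous bounded component times a Schwartz window, modulated, is integrable. -/
lemma component_integrable {A φ : ℝ → ℝ} (hA : Continuous A) (hφ : Continuous φ)
    (hAbdd : ∃ C, ∀ s, |A s| ≤ C) (w : SchwartzMap ℝ ℂ) (t η s : ℝ) :
    Integrable (fun u : ℝ => (A (t + s * u) : ℂ) * e2πi (φ (t + s * u)) * w u
      * e2πi (-(η * (s * u)))) := by
  obtain ⟨C, hC⟩ := hAbdd
  have hw := w.continuous
  refine (w.integrable.norm.const_mul C).mono' (by fun_prop) (Eventually.of_forall fun u => ?_)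
  simp only [norm_mul, norm_e2πi, mul_one, Complex.norm_real, Real.norm_eq_abs]
  exact mul_le_mul_of_nonneg_right (hC _) (norm_nonneg _)

lemma component_bound {A φ : ℝ → ℝ} {ε₁ ε₂ : ℝ} (hA1 : ContDiff ℝ 1 A) (hφ2 : ContDiff ℝ 2 φ)
    (hAbdd : ∃ C, ∀ s, |A s| ≤ C)
    (hApos : ∀ s, 0 < A s) (hA' : ∀ s, |deriv A s| ≤ ε₁)
    (hφ'' : ∀ s, |deriv (deriv φ) s| ≤ ε₂) (w : SchwartzMap ℝ ℂ) (t η : ℝ) {s : ℝ} (hs : 0 < s) :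
    ‖(∫ u : ℝ, (A (t + s * u) : ℂ) * e2πi (φ (t + s * u)) * w u * e2πi (-(η * (s * u))))
        - (A t : ℂ) * e2πi (φ t) * ft w (s * (η - deriv φ t))‖
      ≤ ε₁ * s * absMom w 1 + π * ε₂ * A t * s ^ 2 * absMom w 2 := by
  have hmain : (A t : ℂ) * e2πi (φ t) * ft w (s * (η - deriv φ t))
      = ∫ u : ℝ, (A t : ℂ) * e2πi (φ t) * e2πi (deriv φ t * (s * u)) * w u
          * e2πi (-(η * (s * u))) := by
    unfold ft
    rw [← integral_const_mul]
    refine integral_congr_ae (Eventually.of_forall fun u => ?_)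
    have : -(s * (η - deriv φ t) * u) = deriv φ t * (s * u) + -(η * (s * u)) := by ring
    simp only [this, e2πi_add]
    ring
  have hI1 := component_integrable hA1.continuous hφ2.continuous hAbdd w t η s
  have hw := w.continuous
  have hI2 : Integrable (fun u : ℝ => (A t : ℂ) * e2πi (φ t) * e2πi (deriv φ t * (s * u)) * w u
      * e2πi (-(η * (s * u)))) := by
    refine (w.integrable.norm.const_mul (A t)).mono' (by fun_prop)
      (Eventually.of_forall fun u => le_of_eq ?_)
    simp only [norm_mul, norm_e2πi, mul_one, Complex.norm_real, Real.norm_eq_abs,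
      abs_of_pos (hApos t)]
  have hm1 : Integrable (fun u : ℝ => |u| ^ 1 * ‖w u‖) := w.integrable_pow_mul volume 1
  have hm2 : Integrable (fun u : ℝ => |u| ^ 2 * ‖w u‖) := w.integrable_pow_mul volume 2
  rw [hmain, ← integral_sub hI1 hI2]
  unfold absMom
  rw [← integral_const_mul, ← integral_const_mul,
    ← integral_add (hm1.const_mul _) (hm2.const_mul _)]
  refine norm_integral_le_of_norm_le ((hm1.const_mul _).add (hm2.const_mul _))
    (Eventually.of_forall fun u => ?_)
  rw [← sub_mul, ← sub_mul, norm_mul, norm_mul, norm_e2πi, mul_one]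
  refine (mul_le_mul_of_nonneg_right
    (pure_tone_error hA1 hφ2 hApos hA' hφ'' t (s * u)) (norm_nonneg _)).trans_eq ?_
  simp only [abs_mul, abs_of_pos hs, sq_abs]
  ring

/-- The adaptive STFT after the substitution `τ = σ(t) u`. -/
lemma adSTFT_rescale (σ : ℝ → ℝ) (w x : ℝ → ℂ) (t η : ℝ) (hs : 0 < σ t) :
    adSTFT σ w x t η
      = ∫ u : ℝ, x (t + σ t * u) * w u * e2πi (-(η * (σ t * u))) := by
  have hne : (σ t : ℂ) ≠ 0 := by exact_mod_cast hs.ne'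
  have h := Measure.integral_comp_mul_left
    (fun τ : ℝ => x (t + τ) * w (τ / σ t) * e2πi (-(η * τ))) (σ t)
  simp only [mul_div_cancel_left₀ _ hs.ne'] at h
  rw [h, abs_of_pos (inv_pos.2 hs), ← integral_smul]
  unfold adSTFT
  refine integral_congr_ae (Eventually.of_forall fun u => ?_)
  simp only [Complex.real_smul, Complex.ofReal_inv]
  ring

theorem statement7
    (K : ℕ) (hK : 0 < K)
    (A φ : Fin K → ℝ → ℝ) (ε₁ ε₂ : ℝ) (hε₁ : 0 < ε₁) (hε₂pos : 0 < ε₂)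
    (hA1 : ∀ k, ContDiff ℝ 1 (A k))
    (hAbdd : ∀ k, ∃ C, ∀ s, |A k s| ≤ C)
    (hφ2 : ∀ k, ContDiff ℝ 2 (φ k))
    (hApos : ∀ k s, 0 < A k s)
    (hφ'bd : ∀ k, ∃ c C : ℝ, 0 < c ∧ (∀ s, c ≤ deriv (φ k) s) ∧ ∀ s, deriv (φ k) s ≤ C)
    (hA' : ∀ k s, |deriv (A k) s| ≤ ε₁)
    (hφ'' : ∀ k s, |deriv (deriv (φ k)) s| ≤ ε₂)
    (hsep : ∃ d, 0 < d ∧ ∀ (j : ℕ) (hj : j + 1 < K) (s : ℝ),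
      d ≤ deriv (φ ⟨j + 1, hj⟩) s - deriv (φ ⟨j, Nat.lt_of_succ_lt hj⟩) s)
    (g : SchwartzMap ℝ ℂ) (hg0 : g 0 ≠ 0)
    (σ : ℝ → ℝ) (hσ : ContDiff ℝ 1 σ) (hσpos : ∀ s, 0 < σ s)
    (x : ℝ → ℂ) (hx : ∀ s, x s = ∑ k, (A k s : ℂ) * e2πi (φ k s))
    (Λt₀ : ℝ → ℝ)
    (hΛt₀ : ∀ s, Λt₀ s = K * ε₁ * absMom (deriv (⇑g)) 1 +
      π * ε₂ * absMom (deriv (⇑g)) 2 * σ s * ∑ k, A k s) :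
    ∀ (t η : ℝ),
      ‖adSTFT σ (deriv (⇑g)) x t η -
        2 * (π : ℂ) * Complex.I * (σ t : ℂ) *
          ∑ ℓ, (A ℓ t : ℂ) * e2πi (φ ℓ t) * ((η - deriv (φ ℓ) t : ℝ) : ℂ) *
            ft (⇑g) (σ t * (η - deriv (φ ℓ) t))‖
      ≤ σ t * Λt₀ t := by
  intro t η
  have hs := hσpos t
  let w : SchwartzMap ℝ ℂ := SchwartzMap.derivCLM ℝ ℂ g
  have hw : (⇑w : ℝ → ℂ) = deriv g := rfl
  have hV : adSTFT σ (deriv g) x t η = ∑ k, ∫ u : ℝ, (A k (t + σ t * u) : ℂ)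
      * e2πi (φ k (t + σ t * u)) * w u * e2πi (-(η * (σ t * u))) := by
    rw [adSTFT_rescale σ _ x t η hs, ← integral_finsetSum _ fun k _ =>
      component_integrable (hA1 k).continuous (hφ2 k).continuous (hAbdd k) w t η (σ t)]
    refine integral_congr_ae (Eventually.of_forall fun u => ?_)
    simp only [hx, hw, Finset.sum_mul]
  have hM : 2 * (π : ℂ) * Complex.I * (σ t : ℂ) *
        ∑ ℓ, (A ℓ t : ℂ) * e2πi (φ ℓ t) * ((η - deriv (φ ℓ) t : ℝ) : ℂ) *
          ft (⇑g) (σ t * (η - deriv (φ ℓ) t))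
      = ∑ k, (A k t : ℂ) * e2πi (φ k t) * ft w (σ t * (η - deriv (φ k) t)) := by
    rw [Finset.mul_sum]
    refine Finset.sum_congr rfl fun k _ => ?_
    rw [hw, ft_deriv]
    push_cast
    ring
  rw [hV, hM, ← Finset.sum_sub_distrib]
  refine (norm_sum_le_of_le _ fun k _ => component_bound (hA1 k) (hφ2 k) (hAbdd k) (hApos k)
    (hA' k) (hφ'' k) w t η hs).trans_eq ?_
  rw [hΛt₀, hw, Finset.sum_add_distrib, Finset.sum_const, Finset.card_univ, Fintype.card_fin,
    nsmul_eq_mul, ← Finset.sum_mul, ← Finset.sum_mul, ← Finset.mul_sum]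
  ring

end
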